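/- Let θ > 0 and suppose ξ ∈ ℝ satisfies E[(ξ−Y)·Y·1{Y≤ξ}] = (E[Y] − θ)·E[(ξ−Y)·1{Y≤ξ}]. Set λ := 1 / E[(ξ−Y)·1{Y≤ξ}] (the denominator is strictly positive) and h*(y) := λ·(ξ−y)·1{y≤ξ}. Then h* ≥ 0, ∫ h* dμ = 1, ∫ y·h*(y) dμ(y) = E[Y] − θ, and for every measurable h : ℝ → [0,∞) with ∫ h dμ = 1 and ∫ y·h(y) dμ(y) ≤ E[Y] − θ, one has ∫ h² dμ ≥ ∫ (h*)² dμ. (Closed-form solution of the sensitivity-value program: minimal second moment under the mean-1, nonnegativity and outcome-shift constraints.) -/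

import Mathlib

open MeasureTheory

/-!
With `a = λ (ξ - Y)` one has `h* = a⁺`, hence `a h* = h*²`, while `a h ≤ h* h` for every `h ≥ 0`.
The constraints say that `h` does at least as well as `h*` against the affine function `a` of `Y`,
so `∫ h*² = ∫ a h* ≤ ∫ a h ≤ ∫ h* h`, and `0 ≤ ∫ (h - h*)²` then gives `∫ h*² ≤ ∫ h²`.
-/

section SecondMoment

variable {Ω : Type*} {mΩ : MeasurableSpace Ω} {μ : Measure Ω} {a g h : Ω → ℝ}

theorem integral_sq_le_of_integral_sq_le_integral_mul (hg : MemLp g 2 μ) (hh : MemLp h 2 μ)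
    (hgh : ∫ ω, g ω ^ 2 ∂μ ≤ ∫ ω, g ω * h ω ∂μ) :
    ∫ ω, g ω ^ 2 ∂μ ≤ ∫ ω, h ω ^ 2 ∂μ := by
  have young : ∫ ω, 2 * (g ω * h ω) ∂μ ≤ ∫ ω, (g ω ^ 2 + h ω ^ 2) ∂μ :=
    integral_mono ((hg.integrable_mul hh).const_mul 2) (hg.integrable_sq.add hh.integrable_sq)
      fun ω => by simpa only [mul_assoc] using two_mul_le_add_sq (g ω) (h ω)
  rw [integral_const_mul, integral_add hg.integrable_sq hh.integrable_sq] at young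
  linarith

theorem lintegral_ofReal_sq_le_of_memLp_imp (hg : MemLp g 2 μ) (hh : AEStronglyMeasurable h μ)
    (hgh : MemLp h 2 μ → ∫ ω, g ω ^ 2 ∂μ ≤ ∫ ω, h ω ^ 2 ∂μ) :
    ∫⁻ ω, ENNReal.ofReal (g ω ^ 2) ∂μ ≤ ∫⁻ ω, ENNReal.ofReal (h ω ^ 2) ∂μ := by
  have sq_nonneg_ae (f : Ω → ℝ) : 0 ≤ᵐ[μ] fun ω => f ω ^ 2 := .of_forall fun ω => sq_nonneg (f ω)
  by_cases htop : ∫⁻ ω, ENNReal.ofReal (h ω ^ 2) ∂μ = ⊤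
  · exact htop ▸ le_top
  have h_sq : Integrable (fun ω => h ω ^ 2) μ :=
    (lintegral_ofReal_ne_top_iff_integrable (hh.pow 2) (sq_nonneg_ae h)).1 htop
  rw [← ofReal_integral_eq_lintegral_ofReal hg.integrable_sq (sq_nonneg_ae g),
    ← ofReal_integral_eq_lintegral_ofReal h_sq (sq_nonneg_ae h)]
  exact ENNReal.ofReal_le_ofReal (hgh ((memLp_two_iff_integrable_sq hh).2 h_sq))

theorem integral_posPart_sq_le (ha : MemLp a 2 μ) (hh : MemLp h 2 μ) (h_nonneg : 0 ≤ᵐ[μ] h)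
    (hah : ∫ ω, a ω * (a ω)⁺ ∂μ ≤ ∫ ω, a ω * h ω ∂μ) :
    ∫ ω, (a ω)⁺ ^ 2 ∂μ ≤ ∫ ω, h ω ^ 2 ∂μ := by
  have mul_posPart_self (x : ℝ) : x * x⁺ = x⁺ ^ 2 := by
    rcases le_total 0 x with hx | hx
    · rw [posPart_of_nonneg hx, sq]
    · simp only [posPart_of_nonpos hx, mul_zero, zero_pow two_ne_zero]
  refine integral_sq_le_of_integral_sq_le_integral_mul ha.pos_part hh ?_
  calc ∫ ω, (a ω)⁺ ^ 2 ∂μ = ∫ ω, a ω * (a ω)⁺ ∂μ := by simp only [mul_posPart_self]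
    _ ≤ ∫ ω, a ω * h ω ∂μ := hah
    _ ≤ ∫ ω, (a ω)⁺ * h ω ∂μ :=
      integral_mono_ae (ha.integrable_mul hh) (ha.pos_part.integrable_mul hh) <| by
        filter_upwards [h_nonneg] with ω hω using mul_le_mul_of_nonneg_right (le_posPart _) hω

end SecondMoment

theorem isOpenPosMeasure_withDensity_ofReal {X : Type*} [TopologicalSpace X] [MeasurableSpace X]
    {ν : Measure X} [ν.IsOpenPosMeasure] {p : X → ℝ} (hp : AEMeasurable p ν)
    (hp_pos : ∀ᵐ x ∂ν, 0 < p x) :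
    (ν.withDensity fun x => ENNReal.ofReal (p x)).IsOpenPosMeasure :=
  (withDensity_absolutelyContinuous' hp.ennreal_ofReal <| hp_pos.mono fun _ hx =>
    (ENNReal.ofReal_pos.2 hx).ne').isOpenPosMeasure

section CutoffWeight

variable {Ω : Type*} {mΩ : MeasurableSpace Ω} {μ : Measure Ω} {Y : Ω → ℝ} {ξ : ℝ}

/-- The weight `h* = λ (ξ - Y) 1{Y ≤ ξ}` that solves the sensitivity-value program, with
`λ = 1 / E[(ξ - Y) 1{Y ≤ ξ}]`. It is the zero function when that expectation vanishes. -/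
noncomputable def cutoffWeight (μ : Measure Ω) (Y : Ω → ℝ) (ξ : ℝ) (ω : Ω) : ℝ :=
  if Y ω ≤ ξ then (∫ x in {x | Y x ≤ ξ}, (ξ - Y x) ∂μ)⁻¹ * (ξ - Y ω) else 0

theorem ae_restrict_sub_nonneg (hY : AEMeasurable Y μ) :
    0 ≤ᵐ[μ.restrict {ω | Y ω ≤ ξ}] fun ω => ξ - Y ω :=
  (ae_restrict_mem₀ (nullMeasurableSet_le hY aemeasurable_const)).mono fun _ hω =>
    sub_nonneg.2 hω

theorem setIntegral_sub_pos [IsFiniteMeasure μ] (hY : Integrable Y μ)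
    (hξ : μ {ω | Y ω < ξ} ≠ 0) : 0 < ∫ ω in {ω | Y ω ≤ ξ}, (ξ - Y ω) ∂μ := by
  rw [setIntegral_pos_iff_support_of_nonneg_ae (ae_restrict_sub_nonneg hY.aemeasurable)
    ((integrable_const ξ).sub hY).integrableOn]
  exact (pos_iff_ne_zero.2 hξ).trans_le
    (measure_mono fun ω (hω : Y ω < ξ) => ⟨(sub_pos.2 hω).ne', hω.le⟩)

theorem inv_setIntegral_sub_nonneg (hY : AEMeasurable Y μ) :
    0 ≤ (∫ ω in {ω | Y ω ≤ ξ}, (ξ - Y ω) ∂μ)⁻¹ :=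
  inv_nonneg.2 (integral_nonneg_of_ae (ae_restrict_sub_nonneg hY))

theorem cutoffWeight_eq_posPart (hY : AEMeasurable Y μ) (ω : Ω) :
    cutoffWeight μ Y ξ ω = ((∫ x in {x | Y x ≤ ξ}, (ξ - Y x) ∂μ)⁻¹ * (ξ - Y ω))⁺ := by
  have scale_nonneg := inv_setIntegral_sub_nonneg (ξ := ξ) hY
  unfold cutoffWeight
  split_ifs with hω
  · exact (posPart_of_nonneg (mul_nonneg scale_nonneg (sub_nonneg.2 hω))).symm
  · exact (posPart_of_nonpos
      (mul_nonpos_of_nonneg_of_nonpos scale_nonneg (sub_nonpos.2 (not_le.1 hω).le))).symm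

theorem cutoffWeight_nonneg (hY : AEMeasurable Y μ) (ω : Ω) : 0 ≤ cutoffWeight μ Y ξ ω :=
  cutoffWeight_eq_posPart hY ω ▸ posPart_nonneg _

theorem integral_mul_cutoffWeight (hY : AEMeasurable Y μ) (f : Ω → ℝ) :
    ∫ ω, f ω * cutoffWeight μ Y ξ ω ∂μ =
      (∫ ω in {ω | Y ω ≤ ξ}, (ξ - Y ω) ∂μ)⁻¹ * ∫ ω in {ω | Y ω ≤ ξ}, (ξ - Y ω) * f ω ∂μ := by
  rw [← integral_const_mul, ← integral_indicator₀ (nullMeasurableSet_le hY aemeasurable_const)]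
  congr 1 with ω
  simp only [cutoffWeight, Set.indicator_apply, Set.mem_ofPred_eq]
  split_ifs <;> ring

theorem integral_cutoffWeight (hY : AEMeasurable Y μ)
    (h_ne : ∫ ω in {ω | Y ω ≤ ξ}, (ξ - Y ω) ∂μ ≠ 0) : ∫ ω, cutoffWeight μ Y ξ ω ∂μ = 1 := by
  simpa only [one_mul, mul_one, inv_mul_cancel₀ h_ne] using
    integral_mul_cutoffWeight (ξ := ξ) hY fun _ => 1

theorem integral_const_sub_mul {f : Ω → ℝ} (hf : Integrable f μ)
    (hYf : Integrable (fun ω => Y ω * f ω) μ) :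
    ∫ ω, (ξ - Y ω) * f ω ∂μ = ξ * ∫ ω, f ω ∂μ - ∫ ω, Y ω * f ω ∂μ := by
  simp only [sub_mul]
  rw [integral_sub (hf.const_mul ξ) hYf, integral_const_mul]

theorem lintegral_cutoffWeight_sq_le [IsFiniteMeasure μ] (hY : MemLp Y 2 μ) {h : Ω → ℝ}
    (hh : AEStronglyMeasurable h μ) (h_nonneg : 0 ≤ᵐ[μ] h)
    (h_mean : ∫ ω, h ω ∂μ = ∫ ω, cutoffWeight μ Y ξ ω ∂μ)
    (h_shift : ∫ ω, Y ω * h ω ∂μ ≤ ∫ ω, Y ω * cutoffWeight μ Y ξ ω ∂μ) :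
    ∫⁻ ω, ENNReal.ofReal (cutoffWeight μ Y ξ ω ^ 2) ∂μ ≤ ∫⁻ ω, ENNReal.ofReal (h ω ^ 2) ∂μ := by
  have weight_eq := cutoffWeight_eq_posPart (ξ := ξ) hY.aestronglyMeasurable.aemeasurable
  have scale_nonneg := inv_setIntegral_sub_nonneg (ξ := ξ) hY.aestronglyMeasurable.aemeasurable
  simp only [weight_eq] at h_mean h_shift ⊢
  set scale := (∫ ω in {ω | Y ω ≤ ξ}, (ξ - Y ω) ∂μ)⁻¹
  have affine_memLp : MemLp (fun ω => scale * (ξ - Y ω)) 2 μ :=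
    ((memLp_const ξ).sub hY).const_mul scale
  have posPart_memLp : MemLp (fun ω => (scale * (ξ - Y ω))⁺) 2 μ := affine_memLp.pos_part
  refine lintegral_ofReal_sq_le_of_memLp_imp posPart_memLp hh fun hh₂ =>
    integral_posPart_sq_le affine_memLp hh₂ h_nonneg ?_
  simp only [mul_assoc scale, integral_const_mul]
  rw [integral_const_sub_mul (posPart_memLp.integrable one_le_two)
    (hY.integrable_mul posPart_memLp), integral_const_sub_mul (hh₂.integrable one_le_two)
    (hY.integrable_mul hh₂), h_mean]
  exact mul_le_mul_of_nonneg_left (sub_le_sub_left h_shift _) scale_nonneg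

end CutoffWeight

theorem stmt_7_general {Ω : Type*} {mΩ : MeasurableSpace Ω} {μ : Measure Ω} [IsFiniteMeasure μ]
    {Y : Ω → ℝ} (hY : MemLp Y 2 μ) {ξ c : ℝ} (hξ : μ {ω | Y ω < ξ} ≠ 0)
    (hroot : ∫ ω in {ω | Y ω ≤ ξ}, (ξ - Y ω) * Y ω ∂μ =
      c * ∫ ω in {ω | Y ω ≤ ξ}, (ξ - Y ω) ∂μ) :
    0 < ∫ ω in {ω | Y ω ≤ ξ}, (ξ - Y ω) ∂μ ∧
    (∀ ω, 0 ≤ cutoffWeight μ Y ξ ω) ∧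
    ∫ ω, cutoffWeight μ Y ξ ω ∂μ = 1 ∧
    ∫ ω, Y ω * cutoffWeight μ Y ξ ω ∂μ = c ∧
    ∀ h : Ω → ℝ, Measurable h → (∀ ω, 0 ≤ h ω) →
      ∫ ω, h ω ∂μ = 1 → ∫ ω, Y ω * h ω ∂μ ≤ c →
      ∫⁻ ω, ENNReal.ofReal (cutoffWeight μ Y ξ ω ^ 2) ∂μ ≤
        ∫⁻ ω, ENNReal.ofReal (h ω ^ 2) ∂μ := by
  have hY_meas : AEMeasurable Y μ := hY.aestronglyMeasurable.aemeasurable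
  have h_pos := setIntegral_sub_pos (hY.integrable one_le_two) hξ
  have weight_mean := integral_cutoffWeight hY_meas h_pos.ne'
  have weight_shift : ∫ ω, Y ω * cutoffWeight μ Y ξ ω ∂μ = c := by
    rw [integral_mul_cutoffWeight hY_meas, hroot, mul_comm c, inv_mul_cancel_left₀ h_pos.ne']
  exact ⟨h_pos, cutoffWeight_nonneg hY_meas, weight_mean, weight_shift,
    fun h hh h_nonneg h_mean h_shift =>
      lintegral_cutoffWeight_sq_le hY hh.aestronglyMeasurable (.of_forall h_nonneg)
        (h_mean.trans weight_mean.symm) (h_shift.trans_eq weight_shift.symm)⟩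

/-- Closed-form solution of the sensitivity-value program: with `ξ` solving the
root equation, `λ = 1 / E[(ξ-Y) 1{Y≤ξ}]` and `h*(y) = λ (ξ-y) 1{y≤ξ}`, the weight `h*`
is nonnegative, has mean one, attains `∫ y h*(y) dμ = E[Y] - θ`, and minimizes the second
moment among all nonnegative mean-one weights `h` with `∫ y h(y) dμ ≤ E[Y] - θ`. -/
theorem stmt_7 (μ : Measure ℝ) [IsProbabilityMeasure μ] (p : ℝ → ℝ)
    (hp_cont : Continuous p) (hp_pos : ∀ x, 0 < p x)
    (hμ : μ = MeasureTheory.volume.withDensity fun x => ENNReal.ofReal (p x))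
    (hmom : Integrable (fun y => y ^ 2) μ)
    (θ : ℝ) (hθ : 0 < θ) (ξ : ℝ)
    (hroot : (∫ y in Set.Iic ξ, (ξ - y) * y ∂μ) =
      ((∫ y, y ∂μ) - θ) * ∫ y in Set.Iic ξ, (ξ - y) ∂μ)
    (lam : ℝ) (hlam : lam = (∫ y in Set.Iic ξ, (ξ - y) ∂μ)⁻¹)
    (hstar : ℝ → ℝ) (hhstar : ∀ y, hstar y = if y ≤ ξ then lam * (ξ - y) else 0) :
    0 < (∫ y in Set.Iic ξ, (ξ - y) ∂μ) ∧
    (∀ y, 0 ≤ hstar y) ∧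
    (∫ y, hstar y ∂μ) = 1 ∧
    (∫ y, y * hstar y ∂μ) = (∫ y, y ∂μ) - θ ∧
    ∀ h : ℝ → ℝ, Measurable h → (∀ y, 0 ≤ h y) →
      (∫ y, h y ∂μ) = 1 → (∫ y, y * h y ∂μ) ≤ (∫ y, y ∂μ) - θ →
      (∫⁻ y, ENNReal.ofReal (hstar y ^ 2) ∂μ) ≤ ∫⁻ y, ENNReal.ofReal (h y ^ 2) ∂μ := by
  obtain rfl : hstar = cutoffWeight μ id ξ := funext fun y => by rw [hhstar, hlam]; rfl
  have : μ.IsOpenPosMeasure := hμ ▸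
    isOpenPosMeasure_withDensity_ofReal hp_cont.aemeasurable (.of_forall hp_pos)
  exact stmt_7_general ((memLp_two_iff_integrable_sq aestronglyMeasurable_id).2 hmom)
    (isOpen_Iio.measure_ne_zero μ Set.nonempty_Iio) hroot
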